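/- arXiv:1709.06522 — 2 statements merged into one kernel-verified Lean document; each statement's English description precedes it below -/
import Mathlib

section
/- Let a ∈ (0,π/2) and ε ∈ (0,1] with a + ε ≤ π/2. Then sin(ε/2)·(sin(a)/sin(a+ε/2))·(sin(a+ε) + sin(a))^{−1/2}·(sin(a+ε) − sin(a))^{−1/2} ≥ √2·π^{−2}·a·√ε. Consequently, the angle ω ∈ (0,π/2) with tan(ω) equal to the left-hand side satisfies ω ≥ π^{−2}·a·√ε. -/
open Real MeasureTheory Filter
open scoped RealInnerProductSpace ENNReal NNReal Topology

noncomputable section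

/-- The ambient Euclidean space `ℝ^{d+1}`. -/
abbrev Esp (d : ℕ) : Type := EuclideanSpace ℝ (Fin (d + 1))

/-- The unit sphere `S^d ⊂ ℝ^{d+1}`. -/
def uSphere (d : ℕ) : Set (Esp d) := Metric.sphere 0 1

/-- The spherical Lebesgue measure `σ_d` (d-dimensional Hausdorff measure restricted
to the unit sphere). -/
def sigmaMeas (d : ℕ) : Measure (Esp d) := (μH[(d : ℝ)]).restrict (uSphere d)

/-- `ω_{d+1} = σ_d(S^d)`, the total surface area of the unit sphere in `ℝ^{d+1}`. -/
def omegaTot (d : ℕ) : ℝ := (sigmaMeas d (uSphere d)).toReal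

/-- `ω_d`, the `(d-1)`-dimensional measure of the unit sphere `S^{d-1} ⊂ ℝ^d`. -/
def omegaSm (d : ℕ) : ℝ :=
  (μH[((d : ℝ) - 1)] (Metric.sphere (0 : EuclideanSpace ℝ (Fin d)) 1)).toReal

/-- `κ_d`, the volume of the unit ball in `ℝ^d`. -/
def kappaVol (d : ℕ) : ℝ :=
  (volume (Metric.ball (0 : EuclideanSpace ℝ (Fin d)) 1)).toReal

/-- The geodesic (angular) distance `d_s(x,y) = arccos ⟨x,y⟩` on the unit sphere. -/
def geo {d : ℕ} (x y : Esp d) : ℝ := Real.arccos ⟪x, y⟫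

/-- The spherical ball (cap) `B(e,α)` of radius `α` centred at `e`. -/
def cap {d : ℕ} (e : Esp d) (α : ℝ) : Set (Esp d) := {x ∈ uSphere d | geo x e ≤ α}

/-- `K ∈ 𝒦̄_s^d`: a spherically convex body, i.e. the intersection of the unit sphere
with a closed convex cone `C ≠ {0}` which is not a linear subspace. -/
def IsSphConvBody (d : ℕ) (K : Set (Esp d)) : Prop :=
  ∃ C : Set (Esp d), IsClosed C ∧ Convex ℝ C ∧
    (∀ x ∈ C, ∀ t : ℝ, 0 ≤ t → t • x ∈ C) ∧
    C ≠ {0} ∧ (∀ L : Submodule ℝ (Esp d), C ≠ (L : Set (Esp d))) ∧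
    K = C ∩ uSphere d

/-- `K ∈ 𝒦_s^d`: a proper spherically convex body, i.e. the intersection of the unit
sphere with a line-free closed convex cone `C ≠ {0}`. -/
def IsProperSphConvBody (d : ℕ) (K : Set (Esp d)) : Prop :=
  ∃ C : Set (Esp d), IsClosed C ∧ Convex ℝ C ∧
    (∀ x ∈ C, ∀ t : ℝ, 0 ≤ t → t • x ∈ C) ∧
    C ≠ {0} ∧ (∀ x ∈ C, x ≠ 0 → -x ∉ C) ∧
    K = C ∩ uSphere d

/-- The spherical mean width functional
`U₁(K) = (1/(2 ω_{d+1})) σ_d({x ∈ S^d : x^⊥ ∩ K ≠ ∅})`. -/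
def U1 (d : ℕ) (K : Set (Esp d)) : ℝ :=
  (1 / (2 * omegaTot d)) * (sigmaMeas d {x | ∃ y ∈ K, ⟪x, y⟫ = 0}).toReal

/-- `D(x) = ∫₀^x sin^{d-1} t dt`. -/
def Dfun (d : ℕ) (x : ℝ) : ℝ := ∫ t in (0:ℝ)..x, Real.sin t ^ (d - 1)

/-- `S_e = S^d ∩ e^⊥`, the great subsphere orthogonal to `e`. -/
def equator {d : ℕ} (e : Esp d) : Set (Esp d) := uSphere d ∩ {x | ⟪x, e⟫ = 0}

/-- The rotation invariant probability measure `σ⁰_{d-1}` on the great subsphere `S_e`. -/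
def sigma0 (d : ℕ) (e : Esp d) : Measure (Esp d) :=
  (μH[((d : ℝ) - 1)] (equator e))⁻¹ • (μH[((d : ℝ) - 1)]).restrict (equator e)

/-- The spherical radial function `α_{K,e}(u)`: the geodesic distance from `e` to the
boundary of `K` along the great circle through `e` in direction `u ∈ S_e`. -/
def sphRadial {d : ℕ} (K : Set (Esp d)) (e u : Esp d) : ℝ :=
  sSup {t : ℝ | 0 ≤ t ∧ t ≤ π / 2 ∧ (Real.cos t) • e + (Real.sin t) • u ∈ K}

/-- The set `-int(K*)`: points `e` of the sphere such that `K` is contained in the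
open hemisphere centred at `e`. -/
def negIntPolar (d : ℕ) (K : Set (Esp d)) : Set (Esp d) :=
  {e ∈ uSphere d | ∀ x ∈ K, 0 < ⟪e, x⟫}

/-- Points `e` of the sphere such that `K ⊆ {x : ⟨x,e⟩ ≥ 0}` (closed hemisphere). -/
def hemiCenters (d : ℕ) (K : Set (Esp d)) : Set (Esp d) :=
  {e ∈ uSphere d | ∀ x ∈ K, 0 ≤ ⟪x, e⟫}

/-- The `σ⁰_{d-1}`-average of `D ∘ α_{K,e}` over `S_e`. -/
def avgD (d : ℕ) (K : Set (Esp d)) (e : Esp d) : ℝ :=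
  ∫ u, Dfun d (sphRadial K e u) ∂(sigma0 d e)

/-- The `L²(S_e, σ⁰_{d-1})`-deviation of `D ∘ α_{K,e}` from its average. -/
def L2dev (d : ℕ) (K : Set (Esp d)) (e : Esp d) : ℝ :=
  Real.sqrt (∫ u, (Dfun d (sphRadial K e u) - avgD d K e) ^ 2 ∂(sigma0 d e))

/-- `Δ₂(K)`: infimum of the `L²` deviations over `e ∈ -int(K*)`. -/
def Delta2 (d : ℕ) (K : Set (Esp d)) : ℝ :=
  sInf (L2dev d K '' negIntPolar d K)

/-- `Δ₂*(K)`: infimum of the `L²` deviations over all `e` with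
`K ⊆ {x : ⟨x,e⟩ ≥ 0}`. -/
def Delta2Star (d : ℕ) (K : Set (Esp d)) : ℝ :=
  sInf (L2dev d K '' hemiCenters d K)

/-- The centred spherical inradius `r_e(K) = max{r ≥ 0 : B(e,r) ⊆ K}`. -/
def rcent (d : ℕ) (K : Set (Esp d)) (e : Esp d) : ℝ :=
  sSup {r : ℝ | 0 ≤ r ∧ cap e r ⊆ K}

/-- The centred spherical circumradius `R_e(K) = min{r ≥ 0 : K ⊆ B(e,r)}`. -/
def Rcent (d : ℕ) (K : Set (Esp d)) (e : Esp d) : ℝ :=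
  sInf {r : ℝ | 0 ≤ r ∧ K ⊆ cap e r}

/-- The spherical inradius `Σ_r(K) = max{r_e(K) : e ∈ K}`. -/
def SigmaR (d : ℕ) (K : Set (Esp d)) : ℝ :=
  sSup (rcent d K '' K)

/-- The deviation functional `ϑ_r(K) = min{R_e(K) - r_e(K) : e ∈ K, r_e(K) = Σ_r(K)}`. -/
def thetaR (d : ℕ) (K : Set (Esp d)) : ℝ :=
  sInf ((fun e => Rcent d K e - rcent d K e) '' {e ∈ K | rcent d K e = SigmaR d K})

/-- `Ũ_e(K) = σ_d({x ∈ S^d : (x-e)^⊥ ∩ K ≠ ∅})`. -/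
def Utilde (d : ℕ) (e : Esp d) (K : Set (Esp d)) : ℝ :=
  (sigmaMeas d {x | ∃ y ∈ K, ⟪x - e, y⟫ = 0}).toReal

/-- The spherical Hausdorff distance `δ_s`, based on the geodesic metric. -/
def sphHausdorff (d : ℕ) (K L : Set (Esp d)) : ℝ :=
  max (⨆ x ∈ K, ⨅ y ∈ L, geo x y) (⨆ y ∈ L, ⨅ x ∈ K, geo x y)

/-- Continuity of a functional on `𝒦̄_s^d` with respect to the spherical Hausdorff
metric `δ_s`. -/
def SphContinuous (d : ℕ) (F : Set (Esp d) → ℝ) : Prop :=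
  ∀ K, IsSphConvBody d K → ∀ ε > (0:ℝ), ∃ δ > (0:ℝ), ∀ L, IsSphConvBody d L →
    sphHausdorff d K L < δ → |F K - F L| < ε

/-- A hitting functional: continuous, nonnegative, vanishing exactly on one-pointed
sets. -/
def IsHittingFunctional (d : ℕ) (Φ : Set (Esp d) → ℝ) : Prop :=
  SphContinuous d Φ ∧ (∀ K, IsSphConvBody d K → 0 ≤ Φ K) ∧
    (∀ K, IsSphConvBody d K → (Φ K = 0 ↔ ∃ p, K = {p}))

/-- A size functional: continuous, nonnegative, not identically zero, vanishing on
one-pointed sets. -/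
def IsSizeFunctional (d : ℕ) (S : Set (Esp d) → ℝ) : Prop :=
  SphContinuous d S ∧ (∀ K, IsSphConvBody d K → 0 ≤ S K) ∧
    (∃ K, IsSphConvBody d K ∧ S K ≠ 0) ∧
    (∀ p ∈ uSphere d, S ({p} : Set (Esp d)) = 0)

/-- The isoperimetric constant `τ(Φ,Σ,a) = inf{Φ(K) : K ∈ 𝒦̄_s^d, Σ(K) ≥ a}`. -/
def tauConst (d : ℕ) (Φ S : Set (Esp d) → ℝ) (a : ℝ) : ℝ :=
  sInf (Φ '' {K | IsSphConvBody d K ∧ a ≤ S K})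

/-- The spherical convex hull of a set `V ⊆ S^d`: the intersection of the sphere with
the closed convex cone generated by `V`. -/
def sphConvHull (d : ℕ) (V : Set (Esp d)) : Set (Esp d) :=
  {x ∈ uSphere d | ∃ y ∈ convexHull ℝ V, ∃ t : ℝ, 0 < t ∧ x = t • y}

/-- A spherical polytope: the intersection of the sphere with a finitely generated
(polyhedral) cone, which is also a spherically convex body. -/
def IsSphPolytope (d : ℕ) (P : Set (Esp d)) : Prop :=
  IsSphConvBody d P ∧ ∃ V : Finset (Esp d),
    (V : Set (Esp d)) ⊆ uSphere d ∧ P = sphConvHull d (V : Set (Esp d))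

/-- The vertices (extreme points) of a spherical polytope. -/
def sphExtremePoints (d : ℕ) (P : Set (Esp d)) : Set (Esp d) :=
  {x ∈ P | x ∉ sphConvHull d (P \ {x})}

/-- The boundary of `K` relative to the sphere. -/
def sphFrontier (d : ℕ) (K : Set (Esp d)) : Set (Esp d) :=
  {x ∈ K | ∀ ε > (0:ℝ), ∃ y ∈ uSphere d, y ∉ K ∧ dist y x < ε}

/-- The functions `h_m(t) = (-1)^{m+1} e^{-t} + 2 ∑_{i=0}^{⌊m/2⌋} t^{m-2i}/(m-2i)!`. -/
def hFun (m : ℕ) (t : ℝ) : ℝ :=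
  (-1 : ℝ) ^ (m + 1) * Real.exp (-t) +
    2 * ∑ i ∈ Finset.range (m / 2 + 1), t ^ (m - 2 * i) / (Nat.factorial (m - 2 * i) : ℝ)

/-- Below `π / 4` the tangent is at most `√2` times the angle. -/
theorem tan_le_sqrt_two_mul {ω : ℝ} (h0 : 0 ≤ ω) (h1 : ω ≤ π / 4) :
    Real.tan ω ≤ Real.sqrt 2 * ω := by
  have hcos : Real.sqrt 2 / 2 ≤ Real.cos ω := by
    rw [← Real.cos_pi_div_four]
    exact Real.cos_le_cos_of_nonneg_of_le_pi h0 (by linarith [Real.pi_pos]) h1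
  have hsq : Real.sqrt 2 * Real.sqrt 2 = 2 := Real.mul_self_sqrt (by norm_num)
  have hpos : 0 < Real.sqrt 2 := by positivity
  rw [Real.tan_eq_sin_div_cos, div_le_iff₀ (by linarith)]
  calc Real.sin ω ≤ ω := Real.sin_le h0
    _ = Real.sqrt 2 * ω * (Real.sqrt 2 / 2) := by linear_combination (-(ω / 2)) * hsq
    _ ≤ Real.sqrt 2 * ω * Real.cos ω := by gcongr

/-- The sine is `1`-Lipschitz to the right. -/
theorem sin_add_sub_sin_le (a : ℝ) {ε : ℝ} (hε : 0 ≤ ε) :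
    Real.sin (a + ε) - Real.sin a ≤ ε := by
  have hmid : Real.sin (ε / 2) ≤ ε / 2 ∧ -(ε / 2) ≤ Real.sin (ε / 2) :=
    (abs_le.1 ((Real.abs_sin_le_abs (x := ε / 2)).trans_eq (abs_of_nonneg (by linarith)))).symm
  rw [Real.sin_sub_sin, add_sub_cancel_left]
  nlinarith [Real.neg_one_le_cos ((a + ε + a) / 2), Real.cos_le_one ((a + ε + a) / 2)]

/-- The lower bound for the tangent of the angular radius. -/
theorem sqrt_two_mul_le_tan_radius {a ε : ℝ} (ha : 0 < a) (hε : 0 < ε) (h : a + ε ≤ π / 2) :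
    Real.sqrt 2 * (π ^ 2)⁻¹ * a * Real.sqrt ε ≤
      Real.sin (ε / 2) * (Real.sin a / Real.sin (a + ε / 2)) *
        (Real.sqrt (Real.sin (a + ε) + Real.sin a))⁻¹ *
        (Real.sqrt (Real.sin (a + ε) - Real.sin a))⁻¹ := by
  have hπ := Real.pi_pos
  have hsin_a : 2 / π * a ≤ Real.sin a := Real.mul_le_sin ha.le (by linarith)
  have hsin_half : 2 / π * (ε / 2) ≤ Real.sin (ε / 2) :=
    Real.mul_le_sin (by linarith) (by linarith)
  have hsin_a_pos : 0 < Real.sin a := Real.sin_pos_of_pos_of_lt_pi ha (by linarith)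
  have hmid_pos : 0 < Real.sin (a + ε / 2) :=
    Real.sin_pos_of_pos_of_lt_pi (by linarith) (by linarith)
  have hlt : Real.sin a < Real.sin (a + ε) :=
    Real.sin_lt_sin_of_lt_of_le_pi_div_two (by linarith) h (by linarith)
  have hquot : 2 / π * a ≤ Real.sin a / Real.sin (a + ε / 2) :=
    hsin_a.trans (le_div_self hsin_a_pos.le hmid_pos (Real.sin_le_one _))
  have hadd : (Real.sqrt 2)⁻¹ ≤ (Real.sqrt (Real.sin (a + ε) + Real.sin a))⁻¹ := by
    apply inv_anti₀ (Real.sqrt_pos.2 (by linarith))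
    exact Real.sqrt_le_sqrt (by linarith [Real.sin_le_one (a + ε), Real.sin_le_one a])
  have hsub : (Real.sqrt ε)⁻¹ ≤ (Real.sqrt (Real.sin (a + ε) - Real.sin a))⁻¹ := by
    apply inv_anti₀ (Real.sqrt_pos.2 (by linarith))
    exact Real.sqrt_le_sqrt (sin_add_sub_sin_le a hε.le)
  calc Real.sqrt 2 * (π ^ 2)⁻¹ * a * Real.sqrt ε
      = 2 / π * (ε / 2) * (2 / π * a) * (Real.sqrt 2)⁻¹ * (Real.sqrt ε)⁻¹ := by
        have h2 : Real.sqrt 2 ^ 2 = 2 := Real.sq_sqrt (by norm_num)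
        have hεsq : Real.sqrt ε ^ 2 = ε := Real.sq_sqrt hε.le
        have hεpos : 0 < Real.sqrt ε := Real.sqrt_pos.2 hε
        field_simp
        rw [h2, hεsq]
    _ ≤ _ := by
        have hhalf_pos : 0 < Real.sin (ε / 2) := lt_of_lt_of_le (by positivity) hsin_half
        gcongr

/-- spherical trigonometry estimate in the proof of Theorem 4.4. -/
theorem statement16 (a ε : ℝ) (ha : 0 < a) (ha' : a < π / 2) (hε : 0 < ε) (hε' : ε ≤ 1)
    (h : a + ε ≤ π / 2) :
    Real.sin (ε / 2) * (Real.sin a / Real.sin (a + ε / 2)) *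
        (Real.sqrt (Real.sin (a + ε) + Real.sin a))⁻¹ *
        (Real.sqrt (Real.sin (a + ε) - Real.sin a))⁻¹ ≥
      Real.sqrt 2 * (π ^ 2)⁻¹ * a * Real.sqrt ε ∧
    ∀ ω : ℝ, 0 < ω → ω < π / 2 →
      Real.tan ω = Real.sin (ε / 2) * (Real.sin a / Real.sin (a + ε / 2)) *
        (Real.sqrt (Real.sin (a + ε) + Real.sin a))⁻¹ *
        (Real.sqrt (Real.sin (a + ε) - Real.sin a))⁻¹ →
      (π ^ 2)⁻¹ * a * Real.sqrt ε ≤ ω := by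
  have hbound := sqrt_two_mul_le_tan_radius ha hε h
  refine ⟨hbound, fun ω hω _ htan => ?_⟩
  rw [← htan] at hbound
  by_contra! hlt
  have hsmall : (π ^ 2)⁻¹ * a * Real.sqrt ε ≤ π / 4 := by
    have hπ := Real.pi_gt_three
    have hinv : (π ^ 2)⁻¹ ≤ 1 / 2 := by
      rw [one_div]; exact inv_anti₀ (by norm_num) (by nlinarith)
    have hsqrt : Real.sqrt ε ≤ 1 := Real.sqrt_le_one.2 hε'
    calc (π ^ 2)⁻¹ * a * Real.sqrt ε ≤ 1 / 2 * (π / 2) * 1 := by gcongr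
      _ = π / 4 := by ring
  have htan_le := tan_le_sqrt_two_mul hω.le (hlt.le.trans hsmall)
  have hmul := mul_lt_mul_of_pos_left hlt (Real.sqrt_pos.2 (by norm_num : (0 : ℝ) < 2))
  linarith

end
end

section
/- Let d ≥ 2, a ∈ (0,π/2) and ε ∈ (0,1] with ε ≤ π/2 − a. Then ∫_a^{a+ε/2} cos^{d−1}(t) dt ≥ (3^{d−1}/(2·π^{2d−2}))·ε·(π/2 − a)^{d−1}. -/
open Real MeasureTheory Filter
open scoped RealInnerProductSpace ENNReal NNReal Topology

noncomputable section

/-- A linear lower bound for the cosine on the left half of the interval `[a, π / 2]`. -/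
theorem three_div_pi_sq_mul_le_cos {a t : ℝ} (ha : 0 ≤ a) (hat : a ≤ t)
    (ht : t ≤ a + (π / 2 - a) / 2) : 3 / π ^ 2 * (π / 2 - a) ≤ Real.cos t := by
  have hπ := Real.pi_pos
  have hcos := Real.one_sub_mul_le_cos (ha.trans hat) (by linarith)
  have hinv : 3 / π ^ 2 ≤ 1 / π := by
    rw [div_le_div_iff₀ (by positivity) hπ]
    nlinarith [Real.pi_gt_three]
  calc 3 / π ^ 2 * (π / 2 - a) ≤ 1 / π * (π / 2 - a) :=
        mul_le_mul_of_nonneg_right hinv (by linarith)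
    _ = 1 - 2 / π * (a + (π / 2 - a) / 2) := by field_simp; ring
    _ ≤ 1 - 2 / π * t := by gcongr
    _ ≤ Real.cos t := hcos

/-- integral estimate in the proof of Theorem 4.4. -/
theorem statement17 (d : ℕ) (hd : 2 ≤ d) (a ε : ℝ) (ha : 0 < a) (ha' : a < π / 2)
    (hε : 0 < ε) (hε' : ε ≤ 1) (h : ε ≤ π / 2 - a) :
    (∫ t in a..(a + ε / 2), Real.cos t ^ (d - 1)) ≥
      (3 ^ (d - 1) / (2 * π ^ (2 * d - 2))) * ε * (π / 2 - a) ^ (d - 1) := by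
  have hconst : (3 ^ (d - 1) / (2 * π ^ (2 * d - 2))) * ε * (π / 2 - a) ^ (d - 1) =
      ∫ _ in a..(a + ε / 2), (3 / π ^ 2 * (π / 2 - a)) ^ (d - 1) := by
    rw [intervalIntegral.integral_const, smul_eq_mul, mul_pow, div_pow, ← pow_mul,
      show 2 * (d - 1) = 2 * d - 2 by omega]
    field_simp
    ring
  rw [ge_iff_le, hconst]
  refine intervalIntegral.integral_mono_on (by linarith) (by simp)
    (Continuous.intervalIntegrable (by fun_prop) _ _) fun t ht => ?_
  exact pow_le_pow_left₀ (mul_nonneg (by positivity) (by linarith))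
    (three_div_pi_sq_mul_le_cos ha.le ht.1 (by linarith [ht.2])) _

end
end
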